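/- Let P be a (non-unital) categorified non-symmetric operad, let S = {S_n}_{n≥1} be a family of sets, and let ρ_n : S_n → obj(P(n)) be functions. Let 𝒮 be the syntactic family of categories freely generated by S under the formal partial compositions ∘ᵢ and the formal arrows β, β⁻¹, θ, θ⁻¹ and their whiskerings, and let [−] : 𝒮 → P be the evaluation induced by ρ. Then for any two parallel morphisms φ₁, φ₂ : t₁ → t₂ in 𝒮, one has [φ₁] = [φ₂] in P. -/

import Mathlib

namespace Stmt11

open CategoryTheory

universe u v

/-- A (non-unital) categorified non-symmetric operad: a family of categories `P n`
(for `n ≥ 1`; the value at `0` is irrelevant since compositions require arity `≥ 1`),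
with partial composition bifunctors `∘ᵢ : P m × P k ⥤ P (m + k - 1)` for `1 ≤ i ≤ m`
(given here with an explicit equation `m + k - 1 = n` specifying the target arity, and
explicit — automatically satisfied — index bounds, so that the coherence diagrams can be
stated without casts), natural isomorphisms `β` (sequential associativity) and `θ`
(parallel associativity/commutativity) as in Definition 2.1, satisfying the three
pentagonal and two hexagonal coherence identities of Definition 2.1.  All indices are
`1`-based, as in the paper. -/
structure CategorifiedNsOperad : Type (max (u + 1) (v + 1)) where
  /-- the category of `n`-ary operations -/
  P : ℕ → Type u
  [str : ∀ n, Category.{v} (P n)]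
  /-- the partial composition `x ∘ᵢ y` (with `1`-based index `1 ≤ i ≤ m`) -/
  comp : ∀ {m k n : ℕ} (i : ℕ), 1 ≤ i → i ≤ m → 1 ≤ k → m + k - 1 = n → P m → P k → P n
  /-- the action of `∘ᵢ` on morphisms (making it a bifunctor) -/
  compMap : ∀ {m k n : ℕ} (i : ℕ) (hi1 : 1 ≤ i) (hi2 : i ≤ m) (hk : 1 ≤ k)
      (h : m + k - 1 = n) {a a' : P m} {b b' : P k},
      (a ⟶ a') → (b ⟶ b') → (comp i hi1 hi2 hk h a b ⟶ comp i hi1 hi2 hk h a' b')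
  compMap_id : ∀ {m k n : ℕ} (i : ℕ) (hi1 : 1 ≤ i) (hi2 : i ≤ m) (hk : 1 ≤ k)
      (h : m + k - 1 = n) (a : P m) (b : P k),
      compMap i hi1 hi2 hk h (𝟙 a) (𝟙 b) = 𝟙 (comp i hi1 hi2 hk h a b)
  compMap_comp : ∀ {m k n : ℕ} (i : ℕ) (hi1 : 1 ≤ i) (hi2 : i ≤ m) (hk : 1 ≤ k)
      (h : m + k - 1 = n) {a a' a'' : P m} {b b' b'' : P k}
      (f : a ⟶ a') (f' : a' ⟶ a'') (g : b ⟶ b') (g' : b' ⟶ b''),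
      compMap i hi1 hi2 hk h (f ≫ f') (g ≫ g') =
        compMap i hi1 hi2 hk h f g ≫ compMap i hi1 hi2 hk h f' g'
  /-- the sequential associativity isomorphism
  `β : (κ ∘ᵢ μ) ∘_{i+j-1} ν ≅ κ ∘ᵢ (μ ∘ⱼ ν)` -/
  assoc : ∀ {m n k A B N : ℕ} (i j I : ℕ)
      (hi1 : 1 ≤ i) (hi2 : i ≤ m) (hj1 : 1 ≤ j) (hj2 : j ≤ n) (hn : 1 ≤ n) (hk : 1 ≤ k)
      (hA : m + n - 1 = A) (hB : n + k - 1 = B) (hI : I = i + j - 1)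
      (hI1 : 1 ≤ I) (hI2 : I ≤ A) (hB1 : 1 ≤ B)
      (h1 : A + k - 1 = N) (h2 : m + B - 1 = N) (κ : P m) (μ : P n) (ν : P k),
      comp I hI1 hI2 hk h1 (comp i hi1 hi2 hn hA κ μ) ν ≅
        comp i hi1 hi2 hB1 h2 κ (comp j hj1 hj2 hk hB μ ν)
  /-- naturality of `β` in all three variables -/
  assoc_natural : ∀ {m n k A B N : ℕ} (i j I : ℕ)
      (hi1 : 1 ≤ i) (hi2 : i ≤ m) (hj1 : 1 ≤ j) (hj2 : j ≤ n) (hn : 1 ≤ n) (hk : 1 ≤ k)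
      (hA : m + n - 1 = A) (hB : n + k - 1 = B) (hI : I = i + j - 1)
      (hI1 : 1 ≤ I) (hI2 : I ≤ A) (hB1 : 1 ≤ B)
      (h1 : A + k - 1 = N) (h2 : m + B - 1 = N)
      {κ κ' : P m} {μ μ' : P n} {ν ν' : P k}
      (f : κ ⟶ κ') (g : μ ⟶ μ') (e : ν ⟶ ν'),
      compMap I hI1 hI2 hk h1 (compMap i hi1 hi2 hn hA f g) e ≫
          (assoc i j I hi1 hi2 hj1 hj2 hn hk hA hB hI hI1 hI2 hB1 h1 h2 κ' μ' ν').hom =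
        (assoc i j I hi1 hi2 hj1 hj2 hn hk hA hB hI hI1 hI2 hB1 h1 h2 κ μ ν).hom ≫
          compMap i hi1 hi2 hB1 h2 f (compMap j hj1 hj2 hk hB g e)
  /-- the parallel associativity isomorphism
  `θ : (κ ∘ᵢ y) ∘_{j+p-1} z ≅ (κ ∘ⱼ z) ∘ᵢ y` for `i < j` (where `y` has arity `p` and `z`
  has arity `q`) -/
  tw : ∀ {m p q c d N : ℕ} (i j J : ℕ)
      (hij : i < j) (hi1 : 1 ≤ i) (hi2 : i ≤ m) (hj1 : 1 ≤ j) (hj2 : j ≤ m)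
      (hp : 1 ≤ p) (hq : 1 ≤ q) (hC : m + p - 1 = c) (hD : m + q - 1 = d)
      (hJ : J = j + p - 1) (hJ1 : 1 ≤ J) (hJ2 : J ≤ c) (hid : i ≤ d)
      (h1 : c + q - 1 = N) (h2 : d + p - 1 = N) (κ : P m) (y : P p) (z : P q),
      comp J hJ1 hJ2 hq h1 (comp i hi1 hi2 hp hC κ y) z ≅
        comp i hi1 hid hp h2 (comp j hj1 hj2 hq hD κ z) y
  /-- naturality of `θ` in all three variables -/
  tw_natural : ∀ {m p q c d N : ℕ} (i j J : ℕ)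
      (hij : i < j) (hi1 : 1 ≤ i) (hi2 : i ≤ m) (hj1 : 1 ≤ j) (hj2 : j ≤ m)
      (hp : 1 ≤ p) (hq : 1 ≤ q) (hC : m + p - 1 = c) (hD : m + q - 1 = d)
      (hJ : J = j + p - 1) (hJ1 : 1 ≤ J) (hJ2 : J ≤ c) (hid : i ≤ d)
      (h1 : c + q - 1 = N) (h2 : d + p - 1 = N)
      {κ κ' : P m} {y y' : P p} {z z' : P q}
      (f : κ ⟶ κ') (g : y ⟶ y') (e : z ⟶ z'),
      compMap J hJ1 hJ2 hq h1 (compMap i hi1 hi2 hp hC f g) e ≫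
          (tw i j J hij hi1 hi2 hj1 hj2 hp hq hC hD hJ hJ1 hJ2 hid h1 h2 κ' y' z').hom =
        (tw i j J hij hi1 hi2 hj1 hj2 hp hq hC hD hJ hJ1 hJ2 hid h1 h2 κ y z).hom ≫
          compMap i hi1 hid hp h2 (compMap j hj1 hj2 hq hD f e) g
  /-- the first pentagonal identity (all compositions sequential):
  `(β ∘ 1) ≫ β ≫ (1 ∘ β) = β ≫ β` on `((κ ∘ᵢ τ) ∘ μ) ∘ ν`, with `τ` grafted at `i` in
  `κ`, `μ` grafted at `j` in `τ` and `ν` grafted at `l` in `μ` -/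
  pentagon_seq : ∀ {a b c d e f g p E2 N : ℕ} (i j l M L J2 : ℕ)
      (hi1 : 1 ≤ i) (hi2 : i ≤ a) (hj1 : 1 ≤ j) (hj2 : j ≤ b) (hl1 : 1 ≤ l) (hl2 : l ≤ c)
      (hb : 1 ≤ b) (hc : 1 ≤ c) (hd : 1 ≤ d)
      (he : a + b - 1 = e) (hf : b + c - 1 = f) (hg : c + d - 1 = g)
      (hp1 : f + d - 1 = p) (hp2 : b + g - 1 = p)
      (hE1 : e + c - 1 = E2) (hE2 : a + f - 1 = E2)
      (hM : M = i + j - 1) (hL : L = M + l - 1) (hLiJ : L = i + J2 - 1)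
      (hJ2 : J2 = j + l - 1)
      (hM1 : 1 ≤ M) (hMe : M ≤ e) (hL1 : 1 ≤ L) (hLE : L ≤ E2)
      (hJ21 : 1 ≤ J2) (hJ2f : J2 ≤ f) (hf1 : 1 ≤ f) (hg1 : 1 ≤ g) (hpg : 1 ≤ p)
      (hN1 : E2 + d - 1 = N) (hN2 : e + g - 1 = N) (hN3 : a + p - 1 = N)
      (κ : P a) (τ : P b) (μ : P c) (ν : P d),
      compMap L hL1 hLE hd hN1
          (assoc i j M hi1 hi2 hj1 hj2 hb hc he hf hM hM1 hMe hf1 hE1 hE2 κ τ μ).hom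
          (𝟙 ν) ≫
        (assoc i J2 L hi1 hi2 hJ21 hJ2f hf1 hd hE2 hp1 hLiJ hL1 hLE hpg hN1 hN3
          κ (comp j hj1 hj2 hc hf τ μ) ν).hom ≫
        compMap i hi1 hi2 hpg hN3 (𝟙 κ)
          (assoc j l J2 hj1 hj2 hl1 hl2 hc hd hf hg hJ2 hJ21 hJ2f hg1 hp1 hp2 τ μ ν).hom =
      (assoc M l L hM1 hMe hl1 hl2 hc hd hE1 hg hL hL1 hLE hg1 hN1 hN2
          (comp i hi1 hi2 hb he κ τ) μ ν).hom ≫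
        (assoc i j M hi1 hi2 hj1 hj2 hb hg1 he hp2 hM hM1 hMe hpg hN2 hN3 κ τ
          (comp l hl1 hl2 hd hg μ ν)).hom
  /-- the second pentagonal identity:
  `θ ≫ (θ ∘ 1) ≫ β = (β ∘ 1) ≫ θ` on `((κ ∘ᵤ τ) ∘ μ) ∘ ν`, with `τ` grafted at `u` in
  `κ`, `μ` grafted at `j` in `τ` and `ν` grafted at `w` in `κ`, `u < w` -/
  pentagon_two : ∀ {a b c d e f G E2 E3 N : ℕ} (u j w M W1 L : ℕ)
      (huw : u < w) (hu1 : 1 ≤ u) (hu2 : u ≤ a) (hw1 : 1 ≤ w) (hw2 : w ≤ a)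
      (hj1 : 1 ≤ j) (hj2 : j ≤ b) (hb : 1 ≤ b) (hc : 1 ≤ c) (hd : 1 ≤ d)
      (he : a + b - 1 = e) (hf : b + c - 1 = f) (hG : a + d - 1 = G)
      (hE1 : e + c - 1 = E2) (hE2 : a + f - 1 = E2)
      (hE3 : e + d - 1 = E3) (hE3' : G + b - 1 = E3)
      (hM : M = u + j - 1) (hW1 : W1 = w + b - 1) (hL : L = W1 + c - 1)
      (hLwf : L = w + f - 1)
      (hM1 : 1 ≤ M) (hMe : M ≤ e) (hMW : M < W1) (hW11 : 1 ≤ W1) (hW1e : W1 ≤ e)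
      (hL1 : 1 ≤ L) (hLE2 : L ≤ E2) (hME3 : M ≤ E3) (huG : u ≤ G) (hf1 : 1 ≤ f)
      (hN1 : E2 + d - 1 = N) (hN2 : E3 + c - 1 = N) (hN3 : G + f - 1 = N)
      (κ : P a) (τ : P b) (μ : P c) (ν : P d),
      (tw M W1 L hMW hM1 hMe hW11 hW1e hc hd hE1 hE3 hL hL1 hLE2 hME3 hN1 hN2
          (comp u hu1 hu2 hb he κ τ) μ ν).hom ≫
        compMap M hM1 hME3 hc hN2
          (tw u w W1 huw hu1 hu2 hw1 hw2 hb hd he hG hW1 hW11 hW1e huG hE3 hE3'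
            κ τ ν).hom (𝟙 μ) ≫
        (assoc u j M hu1 huG hj1 hj2 hb hc hE3' hf hM hM1 hME3 hf1 hN2 hN3
          (comp w hw1 hw2 hd hG κ ν) τ μ).hom =
      compMap L hL1 hLE2 hd hN1
          (assoc u j M hu1 hu2 hj1 hj2 hb hc he hf hM hM1 hMe hf1 hE1 hE2 κ τ μ).hom
          (𝟙 ν) ≫
        (tw u w L huw hu1 hu2 hw1 hw2 hf1 hd hE2 hG hLwf hL1 hLE2 huG hN1 hN3 κ
          (comp j hj1 hj2 hc hf τ μ) ν).hom
  /-- the third pentagonal identity: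
  `(θ ∘ 1) ≫ θ ≫ (β ∘ 1) = β ≫ θ` on `((κ ∘ᵤ τ) ∘ μ) ∘ ν`, with `τ` grafted at `u` in
  `κ`, `μ` grafted at `w` in `κ`, `u < w`, and `ν` grafted at `l` in `μ` -/
  pentagon_three : ∀ {a b c d e G g E2 E3 N : ℕ} (u w l W1 V L : ℕ)
      (huw : u < w) (hu1 : 1 ≤ u) (hu2 : u ≤ a) (hw1 : 1 ≤ w) (hw2 : w ≤ a)
      (hl1 : 1 ≤ l) (hl2 : l ≤ c) (hb : 1 ≤ b) (hc : 1 ≤ c) (hd : 1 ≤ d)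
      (he : a + b - 1 = e) (hG : a + c - 1 = G) (hg : c + d - 1 = g)
      (hE1 : e + c - 1 = E2) (hE2 : G + b - 1 = E2)
      (hE3 : G + d - 1 = E3) (hE3' : a + g - 1 = E3)
      (hW1 : W1 = w + b - 1) (hV : V = w + l - 1) (hL : L = W1 + l - 1)
      (hLVb : L = V + b - 1)
      (hW11 : 1 ≤ W1) (hW1e : W1 ≤ e) (hL1 : 1 ≤ L) (hLE2 : L ≤ E2)
      (huV : u < V) (hV1 : 1 ≤ V) (hVG : V ≤ G) (huG : u ≤ G) (huE3 : u ≤ E3)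
      (hg1 : 1 ≤ g)
      (hN1 : E2 + d - 1 = N) (hN2 : E3 + b - 1 = N) (hN3 : e + g - 1 = N)
      (κ : P a) (τ : P b) (μ : P c) (ν : P d),
      compMap L hL1 hLE2 hd hN1
          (tw u w W1 huw hu1 hu2 hw1 hw2 hb hc he hG hW1 hW11 hW1e huG hE1 hE2
            κ τ μ).hom (𝟙 ν) ≫
        (tw u V L huV hu1 huG hV1 hVG hb hd hE2 hE3 hLVb hL1 hLE2 huE3 hN1 hN2
          (comp w hw1 hw2 hc hG κ μ) τ ν).hom ≫
        compMap u hu1 huE3 hb hN2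
          (assoc w l V hw1 hw2 hl1 hl2 hc hd hG hg hV hV1 hVG hg1 hE3 hE3' κ μ ν).hom
          (𝟙 τ) =
      (assoc W1 l L hW11 hW1e hl1 hl2 hc hd hE1 hg hL hL1 hLE2 hg1 hN1 hN3
          (comp u hu1 hu2 hb he κ τ) μ ν).hom ≫
        (tw u w W1 huw hu1 hu2 hw1 hw2 hb hg1 he hE3' hW1 hW11 hW1e huE3 hN3 hN2 κ τ
          (comp l hl1 hl2 hd hg μ ν)).hom
  /-- the first hexagonal identity:
  `θ ≫ (β ∘ 1) ≫ β = (β ∘ 1) ≫ β ≫ (1 ∘ θ)` on `((κ ∘ᵢ τ) ∘ μ) ∘ ν`, with `τ` grafted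
  at `i` in `κ` and `μ`, `ν` grafted at `p < q` in `τ` -/
  hexagon_one : ∀ {a b c d e f fv E2 E3 p2 N : ℕ} (i p q Pm Qn L Q2 : ℕ)
      (hpq : p < q) (hi1 : 1 ≤ i) (hi2 : i ≤ a) (hp1 : 1 ≤ p) (hpb : p ≤ b)
      (hq1 : 1 ≤ q) (hq2 : q ≤ b) (hb : 1 ≤ b) (hc : 1 ≤ c) (hd : 1 ≤ d)
      (he : a + b - 1 = e) (hf : b + c - 1 = f) (hfv : b + d - 1 = fv)
      (hE21 : e + c - 1 = E2) (hE22 : a + f - 1 = E2)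
      (hE31 : e + d - 1 = E3) (hE32 : a + fv - 1 = E3)
      (hp21 : f + d - 1 = p2) (hp22 : fv + c - 1 = p2)
      (hPm : Pm = i + p - 1) (hQn : Qn = i + q - 1) (hL : L = Qn + c - 1)
      (hLiQ2 : L = i + Q2 - 1) (hQ2 : Q2 = q + c - 1)
      (hPm1 : 1 ≤ Pm) (hPme : Pm ≤ e) (hQn1 : 1 ≤ Qn) (hQne : Qn ≤ e) (hPQ : Pm < Qn)
      (hL1 : 1 ≤ L) (hLE2 : L ≤ E2) (hPmE3 : Pm ≤ E3) (hQ21 : 1 ≤ Q2) (hQ2f : Q2 ≤ f)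
      (hf1 : 1 ≤ f) (hfv1 : 1 ≤ fv) (hp2' : 1 ≤ p2) (hpfv : p ≤ fv)
      (hN1 : E2 + d - 1 = N) (hN2 : E3 + c - 1 = N) (hN3 : a + p2 - 1 = N)
      (κ : P a) (τ : P b) (μ : P c) (ν : P d),
      (tw Pm Qn L hPQ hPm1 hPme hQn1 hQne hc hd hE21 hE31 hL hL1 hLE2 hPmE3 hN1 hN2
          (comp i hi1 hi2 hb he κ τ) μ ν).hom ≫
        compMap Pm hPm1 hPmE3 hc hN2
          (assoc i q Qn hi1 hi2 hq1 hq2 hb hd he hfv hQn hQn1 hQne hfv1 hE31 hE32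
            κ τ ν).hom (𝟙 μ) ≫
        (assoc i p Pm hi1 hi2 hp1 hpfv hfv1 hc hE32 hp22 hPm hPm1 hPmE3 hp2' hN2 hN3 κ
          (comp q hq1 hq2 hd hfv τ ν) μ).hom =
      compMap L hL1 hLE2 hd hN1
          (assoc i p Pm hi1 hi2 hp1 hpb hb hc he hf hPm hPm1 hPme hf1 hE21 hE22
            κ τ μ).hom (𝟙 ν) ≫
        (assoc i Q2 L hi1 hi2 hQ21 hQ2f hf1 hd hE22 hp21 hLiQ2 hL1 hLE2 hp2' hN1 hN3 κ
          (comp p hp1 hpb hc hf τ μ) ν).hom ≫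
        compMap i hi1 hi2 hp2' hN3 (𝟙 κ)
          (tw p q Q2 hpq hp1 hpb hq1 hq2 hc hd hf hfv hQ2 hQ21 hQ2f hpfv hp21 hp22
            τ μ ν).hom
  /-- the second hexagonal identity:
  `θ ≫ (θ ∘ 1) ≫ θ = (θ ∘ 1) ≫ θ ≫ (θ ∘ 1)` on `((κ ∘ᵤ τ) ∘ μ) ∘ ν`, with `τ`, `μ`,
  `ν` grafted at `u < v < w` in `κ` -/
  hexagon_two : ∀ {a b c d e Gm Gn E2 E3 E4 N : ℕ} (u v w V1 W1 W2 L : ℕ)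
      (huv : u < v) (hvw : v < w) (huw : u < w)
      (hu1 : 1 ≤ u) (hu2 : u ≤ a) (hv1 : 1 ≤ v) (hv2 : v ≤ a) (hw1 : 1 ≤ w) (hw2 : w ≤ a)
      (hb : 1 ≤ b) (hc : 1 ≤ c) (hd : 1 ≤ d)
      (he : a + b - 1 = e) (hGm : a + c - 1 = Gm) (hGn : a + d - 1 = Gn)
      (hE21 : e + c - 1 = E2) (hE22 : Gm + b - 1 = E2)
      (hE31 : e + d - 1 = E3) (hE32 : Gn + b - 1 = E3)
      (hE41 : Gm + d - 1 = E4) (hE42 : Gn + c - 1 = E4)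
      (hV1 : V1 = v + b - 1) (hW1 : W1 = w + b - 1) (hW2 : W2 = w + c - 1)
      (hL : L = W1 + c - 1) (hLW2 : L = W2 + b - 1)
      (hV11 : 1 ≤ V1) (hV1e : V1 ≤ e) (hW11 : 1 ≤ W1) (hW1e : W1 ≤ e) (hVW : V1 < W1)
      (hL1 : 1 ≤ L) (hLE2 : L ≤ E2) (hV1E3 : V1 ≤ E3) (huW2 : u < W2) (hW21 : 1 ≤ W2)
      (hW2Gm : W2 ≤ Gm) (huGm : u ≤ Gm) (huGn : u ≤ Gn) (huE4 : u ≤ E4) (hvGn : v ≤ Gn)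
      (hN1 : E2 + d - 1 = N) (hN2 : E3 + c - 1 = N) (hN3 : E4 + b - 1 = N)
      (κ : P a) (τ : P b) (μ : P c) (ν : P d),
      (tw V1 W1 L hVW hV11 hV1e hW11 hW1e hc hd hE21 hE31 hL hL1 hLE2 hV1E3 hN1 hN2
          (comp u hu1 hu2 hb he κ τ) μ ν).hom ≫
        compMap V1 hV11 hV1E3 hc hN2
          (tw u w W1 huw hu1 hu2 hw1 hw2 hb hd he hGn hW1 hW11 hW1e huGn hE31 hE32
            κ τ ν).hom (𝟙 μ) ≫
        (tw u v V1 huv hu1 huGn hv1 hvGn hb hc hE32 hE42 hV1 hV11 hV1E3 huE4 hN2 hN3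
          (comp w hw1 hw2 hd hGn κ ν) τ μ).hom =
      compMap L hL1 hLE2 hd hN1
          (tw u v V1 huv hu1 hu2 hv1 hv2 hb hc he hGm hV1 hV11 hV1e huGm hE21 hE22
            κ τ μ).hom (𝟙 ν) ≫
        (tw u W2 L huW2 hu1 huGm hW21 hW2Gm hb hd hE22 hE41 hLW2 hL1 hLE2 huE4 hN1 hN3
          (comp v hv1 hv2 hc hGm κ μ) τ ν).hom ≫
        compMap u hu1 huE4 hb hN3
          (tw v w W2 hvw hv1 hv2 hw1 hw2 hc hd hGm hGn hW2 hW21 hW2Gm hvGn hE41 hE42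
            κ μ ν).hom (𝟙 τ)

attribute [instance] CategorifiedNsOperad.str

/-- The objects of the free categorified non-symmetric operad `𝒮` on a family of sets
`S = {S n}_{n ≥ 1}`: formal iterated partial compositions (fully nested decorated planar
trees), graded by arity. -/
inductive FreeOb (S : ℕ → Type) : ℕ → Type
  | of {n : ℕ} (hn : 1 ≤ n) (s : S n) : FreeOb S n
  | graft {m k n : ℕ} (i : ℕ) (hi1 : 1 ≤ i) (hi2 : i ≤ m) (hk : 1 ≤ k)
      (h : m + k - 1 = n) : FreeOb S m → FreeOb S k → FreeOb S n

/-- The generating morphisms of the free categorified non-symmetric operad `𝒮`: the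
formal arrows `β`, `β⁻¹`, `θ`, `θ⁻¹` and their whiskerings `φ ∘ᵢ id` and `id ∘ⱼ φ`. -/
inductive FreeHom (S : ℕ → Type) : ∀ {n : ℕ}, FreeOb S n → FreeOb S n → Type
  | beta {m n k A B N : ℕ} (i j I : ℕ)
      (hi1 : 1 ≤ i) (hi2 : i ≤ m) (hj1 : 1 ≤ j) (hj2 : j ≤ n) (hn : 1 ≤ n) (hk : 1 ≤ k)
      (hA : m + n - 1 = A) (hB : n + k - 1 = B) (hI : I = i + j - 1)
      (hI1 : 1 ≤ I) (hI2 : I ≤ A) (hB1 : 1 ≤ B)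
      (h1 : A + k - 1 = N) (h2 : m + B - 1 = N)
      (κ : FreeOb S m) (μ : FreeOb S n) (ν : FreeOb S k) :
      FreeHom S (.graft I hI1 hI2 hk h1 (.graft i hi1 hi2 hn hA κ μ) ν)
        (.graft i hi1 hi2 hB1 h2 κ (.graft j hj1 hj2 hk hB μ ν))
  | betaInv {m n k A B N : ℕ} (i j I : ℕ)
      (hi1 : 1 ≤ i) (hi2 : i ≤ m) (hj1 : 1 ≤ j) (hj2 : j ≤ n) (hn : 1 ≤ n) (hk : 1 ≤ k)
      (hA : m + n - 1 = A) (hB : n + k - 1 = B) (hI : I = i + j - 1)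
      (hI1 : 1 ≤ I) (hI2 : I ≤ A) (hB1 : 1 ≤ B)
      (h1 : A + k - 1 = N) (h2 : m + B - 1 = N)
      (κ : FreeOb S m) (μ : FreeOb S n) (ν : FreeOb S k) :
      FreeHom S (.graft i hi1 hi2 hB1 h2 κ (.graft j hj1 hj2 hk hB μ ν))
        (.graft I hI1 hI2 hk h1 (.graft i hi1 hi2 hn hA κ μ) ν)
  | theta {m p q c d N : ℕ} (i j J : ℕ)
      (hij : i < j) (hi1 : 1 ≤ i) (hi2 : i ≤ m) (hj1 : 1 ≤ j) (hj2 : j ≤ m)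
      (hp : 1 ≤ p) (hq : 1 ≤ q) (hC : m + p - 1 = c) (hD : m + q - 1 = d)
      (hJ : J = j + p - 1) (hJ1 : 1 ≤ J) (hJ2 : J ≤ c) (hid : i ≤ d)
      (h1 : c + q - 1 = N) (h2 : d + p - 1 = N)
      (κ : FreeOb S m) (y : FreeOb S p) (z : FreeOb S q) :
      FreeHom S (.graft J hJ1 hJ2 hq h1 (.graft i hi1 hi2 hp hC κ y) z)
        (.graft i hi1 hid hp h2 (.graft j hj1 hj2 hq hD κ z) y)
  | thetaInv {m p q c d N : ℕ} (i j J : ℕ)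
      (hij : i < j) (hi1 : 1 ≤ i) (hi2 : i ≤ m) (hj1 : 1 ≤ j) (hj2 : j ≤ m)
      (hp : 1 ≤ p) (hq : 1 ≤ q) (hC : m + p - 1 = c) (hD : m + q - 1 = d)
      (hJ : J = j + p - 1) (hJ1 : 1 ≤ J) (hJ2 : J ≤ c) (hid : i ≤ d)
      (h1 : c + q - 1 = N) (h2 : d + p - 1 = N)
      (κ : FreeOb S m) (y : FreeOb S p) (z : FreeOb S q) :
      FreeHom S (.graft i hi1 hid hp h2 (.graft j hj1 hj2 hq hD κ z) y)
        (.graft J hJ1 hJ2 hq h1 (.graft i hi1 hi2 hp hC κ y) z)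
  | whiskerL {m k n : ℕ} (i : ℕ) (hi1 : 1 ≤ i) (hi2 : i ≤ m) (hk : 1 ≤ k)
      (h : m + k - 1 = n) (t : FreeOb S m) {x y : FreeOb S k} (f : FreeHom S x y) :
      FreeHom S (.graft i hi1 hi2 hk h t x) (.graft i hi1 hi2 hk h t y)
  | whiskerR {m k n : ℕ} (i : ℕ) (hi1 : 1 ≤ i) (hi2 : i ≤ m) (hk : 1 ≤ k)
      (h : m + k - 1 = n) {x y : FreeOb S m} (f : FreeHom S x y) (t : FreeOb S k) :
      FreeHom S (.graft i hi1 hi2 hk h x t) (.graft i hi1 hi2 hk h y t)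

/-- The quiver of formal expressions of arity `n` and generating morphisms; the free
category of paths on it is the `n`-th category `𝒮 n` of the free categorified
non-symmetric operad on `S`. -/
instance (S : ℕ → Type) (n : ℕ) : Quiver (FreeOb S n) := ⟨fun x y => FreeHom S x y⟩

variable (O : CategorifiedNsOperad.{u, v}) (S : ℕ → Type) (ρ : ∀ n : ℕ, S n → O.P n)

/-- Evaluation of formal expressions in the categorified operad `O`, extending `ρ`. -/
def evalOb : ∀ {n : ℕ}, FreeOb S n → O.P n
  | _, .of _ s => ρ _ s
  | _, .graft i hi1 hi2 hk h x y => O.comp i hi1 hi2 hk h (evalOb x) (evalOb y)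

/-- Evaluation of the generating morphisms in the categorified operad `O`: formal `β` and
`θ` arrows are sent to the structure isomorphisms of `O`, and whiskerings to the action
of the composition bifunctors. -/
def evalHom : ∀ {n : ℕ} {x y : FreeOb S n}, FreeHom S x y → (evalOb O S ρ x ⟶ evalOb O S ρ y)
  | _, _, _, .beta i j I hi1 hi2 hj1 hj2 hn hk hA hB hI hI1 hI2 hB1 h1 h2 κ μ ν =>
      (O.assoc i j I hi1 hi2 hj1 hj2 hn hk hA hB hI hI1 hI2 hB1 h1 h2
        (evalOb O S ρ κ) (evalOb O S ρ μ) (evalOb O S ρ ν)).hom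
  | _, _, _, .betaInv i j I hi1 hi2 hj1 hj2 hn hk hA hB hI hI1 hI2 hB1 h1 h2 κ μ ν =>
      (O.assoc i j I hi1 hi2 hj1 hj2 hn hk hA hB hI hI1 hI2 hB1 h1 h2
        (evalOb O S ρ κ) (evalOb O S ρ μ) (evalOb O S ρ ν)).inv
  | _, _, _, .theta i j J hij hi1 hi2 hj1 hj2 hp hq hC hD hJ hJ1 hJ2 hid h1 h2 κ y z =>
      (O.tw i j J hij hi1 hi2 hj1 hj2 hp hq hC hD hJ hJ1 hJ2 hid h1 h2
        (evalOb O S ρ κ) (evalOb O S ρ y) (evalOb O S ρ z)).hom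
  | _, _, _, .thetaInv i j J hij hi1 hi2 hj1 hj2 hp hq hC hD hJ hJ1 hJ2 hid h1 h2 κ y z =>
      (O.tw i j J hij hi1 hi2 hj1 hj2 hp hq hC hD hJ hJ1 hJ2 hid h1 h2
        (evalOb O S ρ κ) (evalOb O S ρ y) (evalOb O S ρ z)).inv
  | _, _, _, .whiskerL i hi1 hi2 hk h t f =>
      O.compMap i hi1 hi2 hk h (𝟙 (evalOb O S ρ t)) (evalHom f)
  | _, _, _, .whiskerR i hi1 hi2 hk h f t =>
      O.compMap i hi1 hi2 hk h (evalHom f) (𝟙 (evalOb O S ρ t))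

/-- The evaluation prefunctor from the quiver of formal expressions of arity `n` to the
category `O.P n`. -/
def evalPrefunctor (n : ℕ) : Prefunctor (FreeOb S n) (O.P n) where
  obj := evalOb O S ρ
  map := evalHom O S ρ

/-- The evaluation functor `[-] : 𝒮 n ⥤ O.P n`, i.e. the `n`-th component of the unique
strict morphism of categorified non-symmetric operads from the free one on `S` to `O`
extending `ρ`, precomposed with the quotient map `𝒮 → F(S)`. -/
def eval (n : ℕ) : Paths (FreeOb S n) ⥤ O.P n :=
  Paths.lift (evalPrefunctor O S ρ n)

/-! Orient `β` and `θ` as rewriting rules. The resulting system terminates, and its critical pairs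
close up: two overlapping applications of the rules span one of the three pentagons and two
hexagons, while all other pairs commute by naturality or bifunctoriality. Newman's lemma can then be
run with morphisms of the operad in place of mere reachability, so that any two reductions of an
expression to normal form have the same value. Every morphism of `𝒮` is a zigzag of reductions, and
composing it with a reduction `r` of its target to normal form gives the value of a reduction of its
source to normal form. As the value of `r` is invertible, this determines the value of the
morphism. -/

section Rewriting

variable {C : Type*} [Category* C]

/-- The one-step reductions in `W` admit no infinite chain; the relation is oriented so that
targets precede sources. -/
def Terminating (W : MorphismProperty C) : Prop :=
  WellFounded fun y x : C => ∃ f : x ⟶ y, W f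

/-- Joinability of a span in the morphism-valued sense: both legs extend by composites of
`W`-reductions to a *commuting* square. -/
def Joinable (W : MorphismProperty C) {x a b : C} (f : x ⟶ a) (g : x ⟶ b) : Prop :=
  ∃ (c : C) (p : a ⟶ c) (q : b ⟶ c),
    W.multiplicativeClosure p ∧ W.multiplicativeClosure q ∧ f ≫ p = g ≫ q

/-- Local confluence in the morphism-valued sense: one-step reductions out of the same object
are joinable. -/
def LocallyConfluent (W : MorphismProperty C) : Prop :=
  ∀ ⦃x a b : C⦄ (f : x ⟶ a) (g : x ⟶ b), W f → W g → Joinable W f g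

/-- Normal forms: objects out of which there is no one-step reduction. -/
def IsNormal (W : MorphismProperty C) (z : C) : Prop :=
  ∀ ⦃y : C⦄ (f : z ⟶ y), ¬ W f

/-- The left inverses of the morphisms in `W`. -/
def leftInverses (W : MorphismProperty C) : MorphismProperty C :=
  fun x y f => ∃ g : y ⟶ x, W g ∧ f ≫ g = 𝟙 x

variable {W : MorphismProperty C}

theorem Joinable.symm {x a b : C} {f : x ⟶ a} {g : x ⟶ b} (h : Joinable W f g) :
    Joinable W g f := by
  obtain ⟨c, p, q, hp, hq, h⟩ := h
  exact ⟨c, q, p, hq, hp, h.symm⟩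

theorem Joinable.refl {x a : C} (f : x ⟶ a) : Joinable W f f :=
  ⟨a, 𝟙 a, 𝟙 a, .id a, .id a, rfl⟩

theorem Joinable.map {D : Type*} [Category* D] {W' : MorphismProperty D} {F : C ⥤ D}
    {x a b : C} {f : x ⟶ a} {g : x ⟶ b} (h : Joinable W f g) (hF : W ≤ W'.inverseImage F) :
    Joinable W' (F.map f) (F.map g) := by
  obtain ⟨c, p, q, hp, hq, h⟩ := h
  have hF' : W.multiplicativeClosure ≤ W'.multiplicativeClosure.inverseImage F :=
    (MorphismProperty.multiplicativeClosure_le_iff ..).mpr fun _ _ _ hf => .of _ (hF _ hf)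
  exact ⟨_, _, _, hF' _ hp, hF' _ hq, by simpa using congrArg F.map h⟩

theorem sup_leftInverses_le_inverseImage {D : Type*} [Category* D] {W' : MorphismProperty D}
    {F : C ⥤ D} (hF : W ≤ W'.inverseImage F) :
    W ⊔ leftInverses W ≤ (W' ⊔ leftInverses W').inverseImage F := by
  rintro x y f (hf | ⟨g, hg, hfg⟩)
  · exact .inl (hF f hf)
  · exact .inr ⟨F.map g, hF g hg, by rw [← F.map_comp, hfg, F.map_id]⟩

theorem eq_eqToHom_or_exists_comp {x y : C} {f : x ⟶ y} (hf : W.multiplicativeClosure f) :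
    (∃ h : x = y, f = eqToHom h) ∨
      ∃ (a : C) (s : x ⟶ a) (p : a ⟶ y), W s ∧ W.multiplicativeClosure p ∧ f = s ≫ p := by
  rw [MorphismProperty.multiplicativeClosure_eq_multiplicativeClosure'] at hf ⊢
  cases hf with
  | of _ hf => exact .inr ⟨_, f, 𝟙 y, hf, .id y, (Category.comp_id f).symm⟩
  | id => exact .inl ⟨rfl, rfl⟩
  | of_comp s p hs hp => exact .inr ⟨_, s, p, hs, hp, rfl⟩

/-- Newman's lemma, with the commuting squares pasted along its well-founded induction. -/
theorem LocallyConfluent.joinable (hc : LocallyConfluent W) (ht : Terminating W) {x y z : C}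
    {f : x ⟶ y} {g : x ⟶ z} (hf : W.multiplicativeClosure f)
    (hg : W.multiplicativeClosure g) : Joinable W f g := by
  induction x using ht.induction generalizing y z with
  | _ x ih =>
    obtain ⟨rfl, rfl⟩ | ⟨a, s, p, hs, hp, rfl⟩ := eq_eqToHom_or_exists_comp hf
    · exact ⟨z, g, 𝟙 z, hg, .id z, by simp⟩
    obtain ⟨rfl, rfl⟩ | ⟨b, t, q, hs', hq, rfl⟩ := eq_eqToHom_or_exists_comp hg
    · exact ⟨y, 𝟙 y, s ≫ p, .id y, hf, by simp⟩
    obtain ⟨c, u, v, hu, hv, huv⟩ := hc s t hs hs'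
    obtain ⟨d, p', u', hp', hu', hpu⟩ := ih a ⟨s, hs⟩ hp hu
    obtain ⟨e, v', q', hv', hq', hvq⟩ :=
      ih b ⟨t, hs'⟩ (W.multiplicativeClosure.comp_mem _ _ hv hu') hq
    refine ⟨e, p' ≫ v', q', W.multiplicativeClosure.comp_mem _ _ hp' hv', hq', ?_⟩
    calc (s ≫ p) ≫ p' ≫ v' = (s ≫ u) ≫ u' ≫ v' := by simp [reassoc_of% hpu]
      _ = t ≫ (v ≫ u') ≫ v' := by simp [huv]
      _ = (t ≫ q) ≫ q' := by rw [hvq, Category.assoc]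

theorem Terminating.exists_isNormal (ht : Terminating W) (x : C) :
    ∃ (z : C) (r : x ⟶ z), IsNormal W z ∧ W.multiplicativeClosure r := by
  induction x using ht.induction with
  | _ x ih =>
    by_cases hx : IsNormal W x
    · exact ⟨x, 𝟙 x, hx, .id x⟩
    · simp only [IsNormal, not_forall, not_not] at hx
      obtain ⟨y, s, hs⟩ := hx
      obtain ⟨z, r, hz, hr⟩ := ih y ⟨s, hs⟩
      exact ⟨z, s ≫ r, hz, W.multiplicativeClosure.comp_mem _ _ (.of _ hs) hr⟩

theorem LocallyConfluent.exists_comp_eq (hc : LocallyConfluent W) (ht : Terminating W)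
    {x y z : C} {f : x ⟶ y} {r : x ⟶ z} (hf : W.multiplicativeClosure f)
    (hr : W.multiplicativeClosure r) (hz : IsNormal W z) :
    ∃ p : y ⟶ z, W.multiplicativeClosure p ∧ f ≫ p = r := by
  obtain ⟨c, p, q, hp, hq, h⟩ := hc.joinable ht hf hr
  obtain ⟨rfl, rfl⟩ | ⟨a, s, -, hs, -⟩ := eq_eqToHom_or_exists_comp hq
  · exact ⟨p, hp, by simpa using h⟩
  · exact absurd hs (hz s)

theorem LocallyConfluent.eq_of_isNormal (hc : LocallyConfluent W) (ht : Terminating W)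
    {x z : C} {r r' : x ⟶ z} (hr : W.multiplicativeClosure r)
    (hr' : W.multiplicativeClosure r') (hz : IsNormal W z) : r = r' := by
  obtain ⟨p, hp, rfl⟩ := hc.exists_comp_eq ht hr hr' hz
  obtain ⟨_, rfl⟩ | ⟨a, s, -, hs, -⟩ := eq_eqToHom_or_exists_comp hp
  · simp
  · exact absurd hs (hz s)

theorem LocallyConfluent.comp_reduction_of_step_or_leftInverse (hc : LocallyConfluent W)
    (ht : Terminating W) {x y z : C} {f : x ⟶ y} (hf : (W ⊔ leftInverses W) f) {r : y ⟶ z}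
    (hr : W.multiplicativeClosure r) (hz : IsNormal W z) : W.multiplicativeClosure (f ≫ r) := by
  obtain hf | ⟨g, hg, hfg⟩ := hf
  · exact W.multiplicativeClosure.comp_mem _ _ (.of f hf) hr
  · obtain ⟨p, hp, rfl⟩ := hc.exists_comp_eq ht (.of g hg) hr hz
    rwa [reassoc_of% hfg]

theorem LocallyConfluent.comp_reduction_of_zigzag (hc : LocallyConfluent W)
    (ht : Terminating W) {x y z : C} {f : x ⟶ y}
    (hf : (W ⊔ leftInverses W).multiplicativeClosure f) {r : y ⟶ z}
    (hr : W.multiplicativeClosure r) (hz : IsNormal W z) : W.multiplicativeClosure (f ≫ r) := by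
  induction hf with
  | of f hf => exact hc.comp_reduction_of_step_or_leftInverse ht hf hr hz
  | id => simpa using hr
  | comp_of f g _ hg ih =>
    simpa using ih (hc.comp_reduction_of_step_or_leftInverse ht hg hr hz)

theorem LocallyConfluent.eq_of_zigzag (hc : LocallyConfluent W) (ht : Terminating W)
    (hW : W ≤ .monomorphisms C) {x y : C} {f g : x ⟶ y}
    (hf : (W ⊔ leftInverses W).multiplicativeClosure f)
    (hg : (W ⊔ leftInverses W).multiplicativeClosure g) : f = g := by
  obtain ⟨z, r, hz, hr⟩ := ht.exists_isNormal y
  have : Mono r := W.multiplicativeClosure_le_iff (.monomorphisms C) |>.mpr hW _ hr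
  rw [← cancel_mono r]
  exact hc.eq_of_isNormal ht (hc.comp_reduction_of_zigzag ht hf hr hz)
    (hc.comp_reduction_of_zigzag ht hg hr hz) hz

end Rewriting

section Expressions

variable {O S}

/-- The formal expressions of arity `n`, where a morphism is a morphism in `O.P n` between the
values: the setting in which rewriting keeps track of the values of reductions. -/
abbrev Expr (n : ℕ) : Type := InducedCategory (O.P n) (evalOb O S ρ (n := n))

variable {ρ}

/-- The formal composition `x ∘ᵢ y`, with the arity conditions left to `omega`. -/
abbrev graft {m k n : ℕ} (i : ℕ) (x : Expr ρ m) (y : Expr ρ k)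
    (hi1 : 1 ≤ i := by omega) (hi2 : i ≤ m := by omega) (hk : 1 ≤ k := by omega)
    (h : m + k - 1 = n := by omega) : Expr ρ n :=
  FreeOb.graft i hi1 hi2 hk h x y

/-- The functor `t ∘ᵢ -` on formal expressions. -/
def graftLeft {m k n : ℕ} (i : ℕ) (t : Expr ρ m) (hi1 : 1 ≤ i := by omega)
    (hi2 : i ≤ m := by omega) (hk : 1 ≤ k := by omega) (h : m + k - 1 = n := by omega) :
    Expr ρ k ⥤ Expr ρ n where
  obj x := graft i t x hi1 hi2 hk h
  map f := InducedCategory.homMk (O.compMap i hi1 hi2 hk h (𝟙 (evalOb O S ρ t)) f.hom)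
  map_id _ := InducedCategory.hom_ext (O.compMap_id ..)
  map_comp f g := InducedCategory.hom_ext <|
    (congrArg (O.compMap i hi1 hi2 hk h · (f.hom ≫ g.hom)) (Category.comp_id _).symm).trans
      (O.compMap_comp ..)

/-- The functor `- ∘ᵢ t` on formal expressions. -/
def graftRight {m k n : ℕ} (i : ℕ) (t : Expr ρ k) (hi1 : 1 ≤ i := by omega)
    (hi2 : i ≤ m := by omega) (hk : 1 ≤ k := by omega) (h : m + k - 1 = n := by omega) :
    Expr ρ m ⥤ Expr ρ n where
  obj x := graft i x t hi1 hi2 hk h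
  map f := InducedCategory.homMk (O.compMap i hi1 hi2 hk h f.hom (𝟙 (evalOb O S ρ t)))
  map_id _ := InducedCategory.hom_ext (O.compMap_id ..)
  map_comp f g := InducedCategory.hom_ext <|
    (congrArg (O.compMap i hi1 hi2 hk h (f.hom ≫ g.hom)) (Category.comp_id _).symm).trans
      (O.compMap_comp ..)

/-- The value of a formal `β`. -/
abbrev beta {m n k A B N : ℕ} (i j I : ℕ) (κ : Expr ρ m) (μ : Expr ρ n)
    (ν : Expr ρ k)
    (hi1 : 1 ≤ i := by omega) (hi2 : i ≤ m := by omega) (hj1 : 1 ≤ j := by omega)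
    (hj2 : j ≤ n := by omega) (hk : 1 ≤ k := by omega) (hA : m + n - 1 = A := by omega)
    (hB : n + k - 1 = B := by omega) (hI : I = i + j - 1 := by omega)
    (hN : A + k - 1 = N := by omega) :
    graft (n := N) I (graft (n := A) i κ μ) ν ≅ graft (n := N) i κ (graft (n := B) j μ ν) :=
  InducedCategory.isoMk <| O.assoc i j I hi1 hi2 hj1 hj2 (by omega) hk hA hB hI (by omega)
    (by omega) (by omega) hN (by omega) _ _ _

/-- The value of a formal `θ`. -/
abbrev theta {m p q c d N : ℕ} (i j J : ℕ) (κ : Expr ρ m) (y : Expr ρ p)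
    (z : Expr ρ q)
    (hij : i < j := by omega) (hi1 : 1 ≤ i := by omega) (hj2 : j ≤ m := by omega)
    (hp : 1 ≤ p := by omega) (hq : 1 ≤ q := by omega) (hC : m + p - 1 = c := by omega)
    (hD : m + q - 1 = d := by omega) (hJ : J = j + p - 1 := by omega)
    (hN : c + q - 1 = N := by omega) :
    graft (n := N) J (graft (n := c) i κ y) z ≅ graft (n := N) i (graft (n := d) j κ z) y :=
  InducedCategory.isoMk <| O.tw i j J hij hi1 (by omega) (by omega) hj2 hp hq hC hD hJ
    (by omega) (by omega) (by omega) hN (by omega) _ _ _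

/-- The rewriting rules on formal expressions: `β`, `θ` and their whiskerings. -/
inductive Rewrite : ∀ {n : ℕ} {x y : Expr ρ n}, (x ⟶ y) → Prop
  | beta {m n k A B N : ℕ} (i j I : ℕ) (κ : Expr ρ m) (μ : Expr ρ n) (ν : Expr ρ k)
      (hi1 : 1 ≤ i := by omega) (hi2 : i ≤ m := by omega) (hj1 : 1 ≤ j := by omega)
      (hj2 : j ≤ n := by omega) (hk : 1 ≤ k := by omega) (hA : m + n - 1 = A := by omega)
      (hB : n + k - 1 = B := by omega) (hI : I = i + j - 1 := by omega)
      (hN : A + k - 1 = N := by omega) :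
      Rewrite (beta (A := A) (B := B) (N := N) i j I κ μ ν).hom
  | theta {m p q c d N : ℕ} (i j J : ℕ) (κ : Expr ρ m) (y : Expr ρ p) (z : Expr ρ q)
      (hij : i < j := by omega) (hi1 : 1 ≤ i := by omega) (hj2 : j ≤ m := by omega)
      (hp : 1 ≤ p := by omega) (hq : 1 ≤ q := by omega) (hC : m + p - 1 = c := by omega)
      (hD : m + q - 1 = d := by omega) (hJ : J = j + p - 1 := by omega)
      (hN : c + q - 1 = N := by omega) :
      Rewrite (theta (c := c) (d := d) (N := N) i j J κ y z).hom
  | whiskerLeft {m k n : ℕ} (i : ℕ) (t : Expr ρ m) {x y : Expr ρ k} {f : x ⟶ y}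
      (hf : Rewrite f) (hi1 : 1 ≤ i := by omega) (hi2 : i ≤ m := by omega)
      (hk : 1 ≤ k := by omega) (h : m + k - 1 = n := by omega) :
      Rewrite (x := graft i t x) (y := graft i t y) ((graftLeft (n := n) i t).map f)
  | whiskerRight {m k n : ℕ} (i : ℕ) (t : Expr ρ k) {x y : Expr ρ m} {f : x ⟶ y}
      (hf : Rewrite f) (hi1 : 1 ≤ i := by omega) (hi2 : i ≤ m := by omega)
      (hk : 1 ≤ k := by omega) (h : m + k - 1 = n := by omega) :
      Rewrite (x := graft i x t) (y := graft i y t) ((graftRight (n := n) i t).map f)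

variable (O ρ) in
/-- The one-step reductions of arity `n`. -/
def rewriting (n : ℕ) : MorphismProperty (Expr ρ n) := fun _ _ f => Rewrite f

theorem Rewrite.isIso {n : ℕ} {x y : Expr ρ n} {f : x ⟶ y} (hf : Rewrite f) :
    IsIso f := by
  induction hf with
  | beta => infer_instance
  | theta => infer_instance
  | whiskerLeft i t => exact inferInstanceAs (IsIso ((graftLeft i t).map _))
  | whiskerRight i t => exact inferInstanceAs (IsIso ((graftRight i t).map _))

/-! ### Critical pairs -/

theorem joinable_beta_beta {a b c d e f g E N : ℕ} (i j l M L : ℕ) (κ : Expr ρ a)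
    (τ : Expr ρ b) (μ : Expr ρ c) (ν : Expr ρ d)
    (hi1 : 1 ≤ i := by omega) (hi2 : i ≤ a := by omega) (hj1 : 1 ≤ j := by omega)
    (hj2 : j ≤ b := by omega) (hl1 : 1 ≤ l := by omega) (hl2 : l ≤ c := by omega)
    (hd : 1 ≤ d := by omega) (he : a + b - 1 = e := by omega) (hf : b + c - 1 = f := by omega)
    (hg : c + d - 1 = g := by omega) (hE : e + c - 1 = E := by omega)
    (hN : E + d - 1 = N := by omega) (hM : M = i + j - 1 := by omega)
    (hL : L = M + l - 1 := by omega) :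
    Joinable (rewriting O ρ N)
      (beta (A := E) (B := g) (N := N) M l L (graft (n := e) i κ τ) μ ν).hom
      ((graftRight L ν).map (beta (A := e) (B := f) (N := E) i j M κ τ μ).hom) := by
  refine ⟨_, _, _, .of _ (Rewrite.beta (B := b + g - 1) i j M κ τ (graft l μ ν)),
    .comp_of _ _ (.of _ (Rewrite.beta (B := b + g - 1) i (j + l - 1) L κ (graft j τ μ) ν))
      (Rewrite.whiskerLeft i κ (Rewrite.beta j l (j + l - 1) τ μ ν)), ?_⟩
  exact InducedCategory.hom_ext (O.pentagon_seq ..).symm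

theorem joinable_beta_theta {a b c d e f g E N : ℕ} (u w l W L : ℕ) (κ : Expr ρ a)
    (τ : Expr ρ b) (μ : Expr ρ c) (ν : Expr ρ d)
    (hu1 : 1 ≤ u := by omega) (huw : u < w := by omega) (hw2 : w ≤ a := by omega)
    (hl1 : 1 ≤ l := by omega) (hl2 : l ≤ c := by omega) (hb : 1 ≤ b := by omega)
    (hd : 1 ≤ d := by omega) (he : a + b - 1 = e := by omega) (hf : a + c - 1 = f := by omega)
    (hg : c + d - 1 = g := by omega) (hE : e + c - 1 = E := by omega)
    (hN : E + d - 1 = N := by omega) (hW : W = w + b - 1 := by omega)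
    (hL : L = W + l - 1 := by omega) :
    Joinable (rewriting O ρ N)
      (beta (A := E) (B := g) (N := N) W l L (graft (n := e) u κ τ) μ ν).hom
      ((graftRight L ν).map (theta (c := e) (d := f) (N := E) u w W κ τ μ).hom) := by
  refine ⟨_, _, _, .of _ (Rewrite.theta (d := a + g - 1) u w W κ τ (graft l μ ν)),
    .comp_of _ _ (.of _ (Rewrite.theta (d := a + g - 1) u (w + l - 1) L (graft w κ μ) τ ν))
      (Rewrite.whiskerRight u τ (Rewrite.beta w l (w + l - 1) κ μ ν)), ?_⟩
  exact InducedCategory.hom_ext (O.pentagon_three ..).symm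

theorem joinable_theta_beta_of_nested {a b c d e f g E N : ℕ} (i p q P Q L : ℕ) (κ : Expr ρ a)
    (τ : Expr ρ b) (μ : Expr ρ c) (ν : Expr ρ d)
    (hi1 : 1 ≤ i := by omega) (hi2 : i ≤ a := by omega) (hp1 : 1 ≤ p := by omega)
    (hpq : p < q := by omega) (hq2 : q ≤ b := by omega) (hc : 1 ≤ c := by omega)
    (hd : 1 ≤ d := by omega) (he : a + b - 1 = e := by omega) (hf : b + c - 1 = f := by omega)
    (hg : e + d - 1 = g := by omega) (hE : e + c - 1 = E := by omega)
    (hN : E + d - 1 = N := by omega) (hP : P = i + p - 1 := by omega)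
    (hQ : Q = i + q - 1 := by omega) (hL : L = Q + c - 1 := by omega) :
    Joinable (rewriting O ρ N)
      (theta (c := E) (d := g) (N := N) P Q L (graft (n := e) i κ τ) μ ν).hom
      ((graftRight L ν).map (beta (A := e) (B := f) (N := E) i p P κ τ μ).hom) := by
  refine ⟨_, _, _,
    .comp_of _ _ (.of _ (Rewrite.whiskerRight P μ (Rewrite.beta (B := b + d - 1) i q Q κ τ ν)))
      (Rewrite.beta (B := f + d - 1) i p P κ (graft q τ ν) μ),
    .comp_of _ _ (.of _ (Rewrite.beta (B := f + d - 1) i (q + c - 1) L κ (graft p τ μ) ν))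
      (Rewrite.whiskerLeft i κ (Rewrite.theta (d := b + d - 1) p q (q + c - 1) τ μ ν)), ?_⟩
  exact InducedCategory.hom_ext (O.hexagon_one ..)

theorem joinable_theta_beta_of_parallel {a b c d e f g E N : ℕ} (u j w M W L : ℕ) (κ : Expr ρ a)
    (τ : Expr ρ b) (μ : Expr ρ c) (ν : Expr ρ d)
    (hu1 : 1 ≤ u := by omega) (huw : u < w := by omega) (hw2 : w ≤ a := by omega)
    (hj1 : 1 ≤ j := by omega) (hj2 : j ≤ b := by omega) (hc : 1 ≤ c := by omega)
    (hd : 1 ≤ d := by omega) (he : a + b - 1 = e := by omega) (hf : b + c - 1 = f := by omega)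
    (hg : e + d - 1 = g := by omega) (hE : e + c - 1 = E := by omega)
    (hN : E + d - 1 = N := by omega) (hM : M = u + j - 1 := by omega)
    (hW : W = w + b - 1 := by omega) (hL : L = W + c - 1 := by omega) :
    Joinable (rewriting O ρ N)
      (theta (c := E) (d := g) (N := N) M W L (graft (n := e) u κ τ) μ ν).hom
      ((graftRight L ν).map (beta (A := e) (B := f) (N := E) u j M κ τ μ).hom) := by
  refine ⟨_, _, _,
    .comp_of _ _ (.of _ (Rewrite.whiskerRight M μ (Rewrite.theta (d := a + d - 1) u w W κ τ ν)))
      (Rewrite.beta (B := f) u j M (graft w κ ν) τ μ),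
    .of _ (Rewrite.theta (d := a + d - 1) u w L κ (graft j τ μ) ν), ?_⟩
  exact InducedCategory.hom_ext (O.pentagon_two ..)

theorem joinable_theta_theta {a b c d e f g E N : ℕ} (u v w V W L : ℕ) (κ : Expr ρ a)
    (τ : Expr ρ b) (μ : Expr ρ c) (ν : Expr ρ d)
    (hu1 : 1 ≤ u := by omega) (huv : u < v := by omega) (hvw : v < w := by omega)
    (hw2 : w ≤ a := by omega) (hb : 1 ≤ b := by omega) (hc : 1 ≤ c := by omega)
    (hd : 1 ≤ d := by omega) (he : a + b - 1 = e := by omega) (hf : a + c - 1 = f := by omega)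
    (hg : e + d - 1 = g := by omega) (hE : e + c - 1 = E := by omega)
    (hN : E + d - 1 = N := by omega) (hV : V = v + b - 1 := by omega)
    (hW : W = w + b - 1 := by omega) (hL : L = W + c - 1 := by omega) :
    Joinable (rewriting O ρ N)
      (theta (c := E) (d := g) (N := N) V W L (graft (n := e) u κ τ) μ ν).hom
      ((graftRight L ν).map (theta (c := e) (d := f) (N := E) u v V κ τ μ).hom) := by
  refine ⟨_, _, _,
    .comp_of _ _ (.of _ (Rewrite.whiskerRight V μ (Rewrite.theta (d := a + d - 1) u w W κ τ ν)))
      (Rewrite.theta (d := f + d - 1) u v V (graft w κ ν) τ μ),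
    .comp_of _ _ (.of _ (Rewrite.theta (d := f + d - 1) u (w + c - 1) L (graft v κ μ) τ ν))
      (Rewrite.whiskerRight u τ (Rewrite.theta (d := a + d - 1) v w (w + c - 1) κ μ ν)), ?_⟩
  exact InducedCategory.hom_ext (O.hexagon_two ..)

/-! ### Local confluence -/

theorem joinable_beta_whiskerRight {m n k A B N : ℕ} (i j I : ℕ) (κ : Expr ρ m) (μ : Expr ρ n)
    (ν : Expr ρ k)
    (hi1 : 1 ≤ i := by omega) (hi2 : i ≤ m := by omega) (hj1 : 1 ≤ j := by omega)
    (hj2 : j ≤ n := by omega) (hk : 1 ≤ k := by omega) (hA : m + n - 1 = A := by omega)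
    (hB : n + k - 1 = B := by omega) (hI : I = i + j - 1 := by omega)
    (hN : A + k - 1 = N := by omega) {y : Expr ρ A} {f : graft i κ μ ⟶ y} (hf : Rewrite f) :
    Joinable (rewriting O ρ N) (beta (A := A) (B := B) (N := N) i j I κ μ ν).hom
      ((graftRight I ν).map f) := by
  cases hf with
  | beta i' l' _ κ' τ => exact joinable_beta_beta i' l' j i I κ' τ μ ν
  | theta u w _ κ' τ => exact joinable_beta_theta u w j i I κ' τ μ ν
  | @whiskerLeft _ _ _ _ _ _ μ' f hf =>
    refine ⟨_, _, _, .of _ (.whiskerLeft i κ (.whiskerRight (n := B) j ν hf)),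
      .of _ (.beta i j I κ μ' ν), InducedCategory.hom_ext ?_⟩
    exact (O.assoc_natural (f := 𝟙 _) (e := 𝟙 _) ..).symm
  | @whiskerRight _ _ _ _ _ _ κ' f hf =>
    refine ⟨_, _, _, .of _ (.whiskerRight i (graft (n := B) j μ ν) hf),
      .of _ (.beta i j I κ' μ ν), InducedCategory.hom_ext ?_⟩
    have h := O.assoc_natural i j I hi1 hi2 hj1 hj2 (by omega) hk hA hB hI (by omega) (by omega)
      (by omega) hN (by omega) f.hom (𝟙 (evalOb O S ρ μ)) (𝟙 (evalOb O S ρ ν))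
    rw [O.compMap_id] at h
    exact h.symm

theorem joinable_beta {m n k A B N : ℕ} (i j I : ℕ) (κ : Expr ρ m) (μ : Expr ρ n)
    (ν : Expr ρ k)
    (hi1 : 1 ≤ i := by omega) (hi2 : i ≤ m := by omega) (hj1 : 1 ≤ j := by omega)
    (hj2 : j ≤ n := by omega) (hk : 1 ≤ k := by omega) (hA : m + n - 1 = A := by omega)
    (hB : n + k - 1 = B := by omega) (hI : I = i + j - 1 := by omega)
    (hN : A + k - 1 = N := by omega) {y : Expr ρ N}
    {f : graft (n := N) I (graft (n := A) i κ μ) ν ⟶ y} (hf : Rewrite f) :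
    Joinable (rewriting O ρ N) (beta (A := A) (B := B) (N := N) i j I κ μ ν).hom f := by
  cases hf with
  | beta _ j' _ _ _ _ _ _ _ _ _ _ hB' =>
    obtain rfl : j = j' := by omega
    subst hB hB'
    exact .refl _
  | theta => omega
  | @whiskerLeft _ _ _ _ _ _ ν' f hf =>
    refine ⟨_, _, _, .of _ (.whiskerLeft i κ (.whiskerLeft (n := B) j μ hf)),
      .of _ (.beta i j I κ μ ν'), InducedCategory.hom_ext ?_⟩
    have h := O.assoc_natural i j I hi1 hi2 hj1 hj2 (by omega) hk hA hB hI (by omega) (by omega)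
      (by omega) hN (by omega) (𝟙 (evalOb O S ρ κ)) (𝟙 (evalOb O S ρ μ)) f.hom
    rw [O.compMap_id] at h
    exact h.symm
  | whiskerRight _ _ hf => exact joinable_beta_whiskerRight i j I κ μ ν (hf := hf)

theorem joinable_theta_whiskerRight {m p q c d N : ℕ} (i j J : ℕ) (κ : Expr ρ m) (y : Expr ρ p)
    (z : Expr ρ q)
    (hij : i < j := by omega) (hi1 : 1 ≤ i := by omega) (hj2 : j ≤ m := by omega)
    (hp : 1 ≤ p := by omega) (hq : 1 ≤ q := by omega) (hC : m + p - 1 = c := by omega)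
    (hD : m + q - 1 = d := by omega) (hJ : J = j + p - 1 := by omega)
    (hN : c + q - 1 = N := by omega) {x : Expr ρ c} {f : graft i κ y ⟶ x} (hf : Rewrite f) :
    Joinable (rewriting O ρ N) (theta (c := c) (d := d) (N := N) i j J κ y z).hom
      ((graftRight J z).map f) := by
  cases hf with
  | @beta _ b _ _ _ _ i' l _ κ' τ =>
    by_cases h : j ≤ i' + b - 1
    · exact joinable_theta_beta_of_nested i' l (j - i' + 1) i j J κ' τ y z
    · exact joinable_theta_beta_of_parallel i' l (j - b + 1) i j J κ' τ y z
  | @theta _ b _ _ _ _ u v _ κ' τ =>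
    exact joinable_theta_theta u v (j - b + 1) i j J κ' τ y z
  | @whiskerLeft _ _ _ _ _ _ y' f hf =>
    refine ⟨_, _, _, .of _ (.whiskerLeft i (graft (n := d) j κ z) hf),
      .of _ (.theta i j J κ y' z), InducedCategory.hom_ext ?_⟩
    have h := O.tw_natural i j J hij hi1 (by omega) (by omega) hj2 hp hq hC hD hJ (by omega)
      (by omega) (by omega) hN (by omega) (𝟙 (evalOb O S ρ κ)) f.hom (𝟙 (evalOb O S ρ z))
    rw [O.compMap_id j] at h
    exact h.symm
  | @whiskerRight _ _ _ _ _ _ κ' f hf =>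
    refine ⟨_, _, _, .of _ (.whiskerRight i y (.whiskerRight (n := d) j z hf)),
      .of _ (.theta i j J κ' y z), InducedCategory.hom_ext ?_⟩
    exact (O.tw_natural (g := 𝟙 _) (e := 𝟙 _) ..).symm

theorem joinable_theta {m p q c d N : ℕ} (i j J : ℕ) (κ : Expr ρ m) (y : Expr ρ p)
    (z : Expr ρ q)
    (hij : i < j := by omega) (hi1 : 1 ≤ i := by omega) (hj2 : j ≤ m := by omega)
    (hp : 1 ≤ p := by omega) (hq : 1 ≤ q := by omega) (hC : m + p - 1 = c := by omega)
    (hD : m + q - 1 = d := by omega) (hJ : J = j + p - 1 := by omega)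
    (hN : c + q - 1 = N := by omega) {x : Expr ρ N}
    {f : graft (n := N) J (graft (n := c) i κ y) z ⟶ x} (hf : Rewrite f) :
    Joinable (rewriting O ρ N) (theta (c := c) (d := d) (N := N) i j J κ y z).hom f := by
  cases hf with
  | beta => omega
  | theta _ j' _ _ _ _ _ _ _ _ _ _ hD' =>
    obtain rfl : j = j' := by omega
    subst hD hD'
    exact .refl _
  | @whiskerLeft _ _ _ _ _ _ z' f hf =>
    refine ⟨_, _, _, .of _ (.whiskerRight i y (.whiskerLeft (n := d) j κ hf)),
      .of _ (.theta i j J κ y z'), InducedCategory.hom_ext ?_⟩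
    have h := O.tw_natural i j J hij hi1 (by omega) (by omega) hj2 hp hq hC hD hJ (by omega)
      (by omega) (by omega) hN (by omega) (𝟙 (evalOb O S ρ κ)) (𝟙 (evalOb O S ρ y)) f.hom
    rw [O.compMap_id] at h
    exact h.symm
  | whiskerRight _ _ hf => exact joinable_theta_whiskerRight i j J κ y z (hf := hf)

theorem joinable_whiskerLeft_whiskerRight {m k n : ℕ} (i : ℕ) {x x' : Expr ρ m} {y y' : Expr ρ k}
    {f : x ⟶ x'} {g : y ⟶ y'} (hf : Rewrite f) (hg : Rewrite g) (hi1 : 1 ≤ i := by omega)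
    (hi2 : i ≤ m := by omega) (hk : 1 ≤ k := by omega) (h : m + k - 1 = n := by omega) :
    Joinable (rewriting O ρ n) (x := graft i x y) ((graftLeft i x).map g)
      ((graftRight i y).map f) := by
  refine ⟨_, _, _, .of _ (.whiskerRight i y' hf), .of _ (.whiskerLeft i x' hg),
    InducedCategory.hom_ext ?_⟩
  change O.compMap i hi1 hi2 hk h (𝟙 _) g.hom ≫ O.compMap i hi1 hi2 hk h f.hom (𝟙 _) =
    O.compMap i hi1 hi2 hk h f.hom (𝟙 _) ≫ O.compMap i hi1 hi2 hk h (𝟙 _) g.hom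
  simp [← O.compMap_comp]

theorem locallyConfluent_rewriting (n : ℕ) : LocallyConfluent (rewriting O ρ n) := by
  intro x a b f g (hf : Rewrite f) (hg : Rewrite g)
  induction hf with
  | beta i j I κ μ ν => exact joinable_beta i j I κ μ ν (hf := hg)
  | theta i j J κ y z => exact joinable_theta i j J κ y z (hf := hg)
  | whiskerLeft i t hf hi1 hi2 hk h ih =>
    cases hg with
    | beta => exact (joinable_beta (hf := .whiskerLeft _ _ hf) ..).symm
    | theta => exact (joinable_theta (hf := .whiskerLeft _ _ hf) ..).symm
    | whiskerLeft _ _ hg =>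
      exact (ih _ hg).map (F := graftLeft i t) fun _ _ _ hf => .whiskerLeft i t hf
    | whiskerRight _ _ hg => exact joinable_whiskerLeft_whiskerRight i hg hf
  | whiskerRight i t hf hi1 hi2 hk h ih =>
    cases hg with
    | beta => exact (joinable_beta (hf := .whiskerRight _ _ hf) ..).symm
    | theta => exact (joinable_theta (hf := .whiskerRight _ _ hf) ..).symm
    | whiskerLeft _ _ hg => exact (joinable_whiskerLeft_whiskerRight i hf hg).symm
    | whiskerRight _ _ hg =>
      exact (ih _ hg).map (F := graftRight i t) fun _ _ _ hf => .whiskerRight i t hf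

/-! ### Termination -/

namespace FreeOb

/-- The number of compositions in a formal expression. -/
def graftCount : ∀ {n : ℕ}, FreeOb S n → ℕ
  | _, .of _ _ => 0
  | _, .graft _ _ _ _ _ x y => graftCount x + graftCount y + 1

/-- The number of compositions along the leftmost branch of a formal expression. -/
def spineLength : ∀ {n : ℕ}, FreeOb S n → ℕ
  | _, .of _ _ => 0
  | _, .graft _ _ _ _ _ x _ => spineLength x + 1

/-- The weight that every `β` decreases. The summand of a composition is chosen so that `θ`
preserves the total. -/
def sequentialWeight : ∀ {n : ℕ}, FreeOb S n → ℕ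
  | _, .of _ _ => 0
  | _, .graft _ _ _ _ _ x y =>
    sequentialWeight x + sequentialWeight y + (graftCount y + 1) * graftCount x

/-- The weight that every `θ` decreases: since `θ` moves the smaller insertion index outwards,
indices are weighted by the depth of the spine below them. -/
def parallelWeight : ∀ {n : ℕ}, FreeOb S n → ℕ
  | _, .of _ _ => 0
  | _, .graft i _ _ _ _ x y => parallelWeight x + parallelWeight y + spineLength x * i

end FreeOb

open FreeOb

theorem Rewrite.graftCount_eq {n : ℕ} {x y : Expr ρ n} {f : x ⟶ y} (hf : Rewrite f) :
    graftCount y = graftCount x := by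
  induction hf <;> simp only [graftCount] <;> lia

theorem Rewrite.sequentialWeight_lt_or {n : ℕ} {x y : Expr ρ n} {f : x ⟶ y} (hf : Rewrite f) :
    sequentialWeight y < sequentialWeight x ∨
      sequentialWeight y = sequentialWeight x ∧ spineLength y = spineLength x ∧
        parallelWeight y < parallelWeight x := by
  induction hf with
  | beta =>
    left
    simp only [sequentialWeight, graftCount]
    nlinarith
  | theta i j J κ y z =>
    have hi : i < J := by omega
    have hj : spineLength κ * j ≤ spineLength κ * J := Nat.mul_le_mul_left _ (by omega)
    simp only [sequentialWeight, graftCount, spineLength, parallelWeight]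
    exact .inr ⟨by ring, trivial, by nlinarith⟩
  | whiskerLeft i t hf _ _ _ _ ih =>
    simp only [sequentialWeight, spineLength, parallelWeight, hf.graftCount_eq]
    lia
  | whiskerRight i t hf _ _ _ _ ih =>
    simp only [sequentialWeight, spineLength, parallelWeight, hf.graftCount_eq]
    obtain h | ⟨h, hs, hp⟩ := ih
    · lia
    · exact .inr ⟨by lia, by lia, by rw [hs]; lia⟩

theorem terminating_rewriting (n : ℕ) : Terminating (rewriting O ρ n) := by
  refine Subrelation.wf ?_ (InvImage.wf
    (fun x : Expr ρ n => toLex (sequentialWeight x, parallelWeight x)) wellFounded_lt)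
  rintro y x ⟨f, hf : Rewrite f⟩
  exact Prod.Lex.toLex_lt_toLex.mpr <|
    hf.sequentialWeight_lt_or.imp_right fun ⟨h, _, hp⟩ => ⟨h, hp⟩

/-! ### Zigzags -/

theorem rewriting_le_monomorphisms (n : ℕ) : rewriting O ρ n ≤ .monomorphisms _ :=
  fun _ _ _ hf => have := Rewrite.isIso hf; .infer_property _

theorem homMk_evalHom_mem_sup_leftInverses {n : ℕ} {x y : FreeOb S n} (f : FreeHom S x y) :
    (rewriting O ρ n ⊔ leftInverses (rewriting O ρ n))
      (InducedCategory.homMk (X := (x : Expr ρ n)) (Y := (y : Expr ρ n)) (evalHom O S ρ f)) := by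
  induction f with
  | beta i j I _ _ _ _ _ _ _ _ _ _ _ _ _ _ κ μ ν => exact .inl (.beta i j I κ μ ν)
  | betaInv i j I _ _ _ _ _ _ hA hB _ _ _ _ h1 _ κ μ ν =>
    exact .inr ⟨_, .beta i j I κ μ ν, (beta i j I κ μ ν).inv_hom_id⟩
  | theta i j J _ _ _ _ _ _ _ _ _ _ _ _ _ _ _ κ y z => exact .inl (.theta i j J κ y z)
  | thetaInv i j J _ _ _ _ _ _ _ _ _ _ _ _ _ _ _ κ y z =>
    exact .inr ⟨_, .theta i j J κ y z, (theta i j J κ y z).inv_hom_id⟩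
  | whiskerL i _ _ _ _ t f ih =>
    exact sup_leftInverses_le_inverseImage (F := graftLeft i t)
      (fun _ _ _ hf => .whiskerLeft i t hf) _ ih
  | whiskerR i _ _ _ _ f t ih =>
    exact sup_leftInverses_le_inverseImage (F := graftRight i t)
      (fun _ _ _ hf => .whiskerRight i t hf) _ ih

theorem homMk_eval_map_mem_multiplicativeClosure {n : ℕ} {x y : FreeOb S n} (p : Quiver.Path x y) :
    (rewriting O ρ n ⊔ leftInverses (rewriting O ρ n)).multiplicativeClosure
      (InducedCategory.homMk (X := (x : Expr ρ n)) (Y := (y : Expr ρ n))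
        ((eval O S ρ n).map (X := x) (Y := y) p)) := by
  induction p with
  | nil => exact .id _
  | cons p f ih => exact .comp_of _ _ ih (homMk_evalHom_mem_sup_leftInverses f)

end Expressions

/-- **Theorem 2.6 (coherence theorem for categorified non-symmetric operads).**
For any categorified non-symmetric operad `O`, any family of sets `S = {S n}_{n ≥ 1}`
with evaluation functions `ρ n : S n → obj (O.P n)`, and any two parallel morphisms
`φ₁ φ₂ : t₁ ⟶ t₂` in the free (syntactic) categorified non-symmetric operad `𝒮` on `S`,
the evaluations of `φ₁` and `φ₂` in `O` coincide: `[φ₁] = [φ₂]`. -/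
theorem coherence_categorified_ns_operad {n : ℕ} (t₁ t₂ : Paths (FreeOb S n))
    (φ₁ φ₂ : t₁ ⟶ t₂) :
    (eval O S ρ n).map φ₁ = (eval O S ρ n).map φ₂ :=
  congrArg InducedCategory.Hom.hom <|
    (locallyConfluent_rewriting n).eq_of_zigzag (terminating_rewriting n)
      (rewriting_le_monomorphisms n) (homMk_eval_map_mem_multiplicativeClosure φ₁)
      (homMk_eval_map_mem_multiplicativeClosure φ₂)

end Stmt11
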